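/- arXiv:2103.15387 — 2 statements merged into one kernel-verified Lean document; each statement's English description precedes it below -/
import Mathlib

section
/- Let n ≥ 1 and let A, B, F be real n×n matrices with A and B invertible. Then dist(F, SO(n)) ≤ (1 + |A⁻¹ − Id|)(1 + |B⁻¹ − Id|)·dist(A F B, SO(n)) + |A⁻¹ − Id| + |B⁻¹ − Id| + |A⁻¹ − Id|·|B⁻¹ − Id|. -/
open Matrix

/-- The Frobenius norm of a real square matrix, `|F|² = tr(Fᵀ F)`. -/
noncomputable def frob {n : ℕ} (F : Matrix (Fin n) (Fin n) ℝ) : ℝ :=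
  Real.sqrt ((Fᵀ * F).trace)

/-- The special orthogonal group `SO(n)` as a set of matrices. -/
def SOn (n : ℕ) : Set (Matrix (Fin n) (Fin n) ℝ) :=
  {Q | Qᵀ * Q = 1 ∧ Q.det = 1}

/-- The Frobenius distance of a matrix to `SO(n)`. -/
noncomputable def distSO {n : ℕ} (F : Matrix (Fin n) (Fin n) ℝ) : ℝ :=
  sInf ((fun Q => frob (F - Q)) '' SOn n)

section FrobHelpers
attribute [local instance] Matrix.frobeniusNormedAddCommGroup Matrix.frobeniusNormedRing

lemma frob_eq_norm {n : ℕ} (F : Matrix (Fin n) (Fin n) ℝ) : frob F = ‖F‖ := by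
  rw [Matrix.frobenius_norm_def, frob, Real.sqrt_eq_rpow]
  congr 1
  simp only [Matrix.trace, Matrix.diag, Matrix.mul_apply, Matrix.transpose_apply]
  rw [Finset.sum_comm]
  refine Finset.sum_congr rfl fun i _ => Finset.sum_congr rfl fun j _ => ?_
  simp [sq]

lemma frob_add_le {n : ℕ} (F G : Matrix (Fin n) (Fin n) ℝ) :
    frob (F + G) ≤ frob F + frob G := by
  simp only [frob_eq_norm]
  exact norm_add_le F G

lemma frob_mul_le {n : ℕ} (F G : Matrix (Fin n) (Fin n) ℝ) :
    frob (F * G) ≤ frob F * frob G := by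
  simp only [frob_eq_norm]
  exact Matrix.frobenius_norm_mul F G

end FrobHelpers

lemma frob_nonneg {n : ℕ} (F : Matrix (Fin n) (Fin n) ℝ) : 0 ≤ frob F := Real.sqrt_nonneg _

lemma frob_orth_mul {n : ℕ} (Q F : Matrix (Fin n) (Fin n) ℝ) (hQ : Qᵀ * Q = 1) :
    frob (Q * F) = frob F := by
  unfold frob
  rw [Matrix.transpose_mul, Matrix.mul_assoc, ← Matrix.mul_assoc Qᵀ, hQ, Matrix.one_mul]

lemma frob_mul_orth {n : ℕ} (Q F : Matrix (Fin n) (Fin n) ℝ) (hQ : Qᵀ * Q = 1) :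
    frob (F * Q) = frob F := by
  have hQ' : Q * Qᵀ = 1 := mul_eq_one_comm.mp hQ
  unfold frob
  rw [Matrix.transpose_mul, Matrix.mul_assoc, Matrix.trace_mul_comm, Matrix.mul_assoc,
    Matrix.mul_assoc, hQ', Matrix.mul_one]

lemma frob_key {n : ℕ} (A B F Q : Matrix (Fin n) (Fin n) ℝ)
    (hA : IsUnit A) (hB : IsUnit B) (hQ : Qᵀ * Q = 1) :
    frob (F - Q) ≤
      (1 + frob (A⁻¹ - 1)) * (1 + frob (B⁻¹ - 1)) * frob (A * F * B - Q)
        + (frob (A⁻¹ - 1) + frob (B⁻¹ - 1) + frob (A⁻¹ - 1) * frob (B⁻¹ - 1)) := by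
  have hA' : A⁻¹ * A = 1 := Matrix.nonsing_inv_mul A ((Matrix.isUnit_iff_isUnit_det A).mp hA)
  have hB' : B * B⁻¹ = 1 := Matrix.mul_nonsing_inv B ((Matrix.isUnit_iff_isUnit_det B).mp hB)
  have hF : A⁻¹ * (A * F * B) * B⁻¹ = F := by
    calc A⁻¹ * (A * F * B) * B⁻¹ = (A⁻¹ * A) * F * (B * B⁻¹) := by noncomm_ring
      _ = F := by rw [hA', hB']; simp
  generalize hG : A * F * B - Q = G
  have hG' : A * F * B = G + Q := by rw [← hG]; abel
  rw [hG'] at hF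
  generalize ha : A⁻¹ - 1 = a
  generalize hb : B⁻¹ - 1 = b
  have ha' : A⁻¹ = 1 + a := by rw [← ha]; abel
  have hb' : B⁻¹ = 1 + b := by rw [← hb]; abel
  rw [ha', hb'] at hF
  have e : F - Q = (G + a * G) + (G + a * G) * b + (a * Q + Q * b + (a * Q) * b) := by
    rw [← hF]; noncomm_ring
  rw [e]
  have h1 := frob_add_le ((G + a * G) + (G + a * G) * b) (a * Q + Q * b + (a * Q) * b)
  have h2 := frob_add_le (G + a * G) ((G + a * G) * b)
  have h3 := frob_add_le G (a * G)
  have h4 := frob_mul_le a G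
  have h5 := frob_mul_le (G + a * G) b
  have h6 := frob_add_le (a * Q + Q * b) ((a * Q) * b)
  have h7 := frob_add_le (a * Q) (Q * b)
  have h8 := frob_mul_le (a * Q) b
  rw [frob_mul_orth Q a hQ] at h7 h8
  rw [frob_orth_mul Q b hQ] at h7
  have h9 : frob (G + a * G) * frob b ≤ (frob G + frob a * frob G) * frob b :=
    mul_le_mul_of_nonneg_right (by linarith) (frob_nonneg b)
  linarith

theorem dist_SOn_perturbed {n : ℕ} (hn : 1 ≤ n) (A B F : Matrix (Fin n) (Fin n) ℝ)
    (hA : IsUnit A) (hB : IsUnit B) :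
    distSO F ≤
      (1 + frob (A⁻¹ - 1)) * (1 + frob (B⁻¹ - 1)) * distSO (A * F * B)
        + frob (A⁻¹ - 1) + frob (B⁻¹ - 1) + frob (A⁻¹ - 1) * frob (B⁻¹ - 1) := by
  have ha := frob_nonneg (A⁻¹ - 1)
  have hb := frob_nonneg (B⁻¹ - 1)
  have hK : 0 < (1 + frob (A⁻¹ - 1)) * (1 + frob (B⁻¹ - 1)) := by positivity
  have h : (distSO F - (frob (A⁻¹ - 1) + frob (B⁻¹ - 1) + frob (A⁻¹ - 1) * frob (B⁻¹ - 1)))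
      / ((1 + frob (A⁻¹ - 1)) * (1 + frob (B⁻¹ - 1))) ≤ distSO (A * F * B) := by
    apply le_csInf
    · exact ⟨_, 1, ⟨by simp, by simp⟩, rfl⟩
    · rintro _ ⟨Q, hQ, rfl⟩
      rw [div_le_iff₀' hK]
      have h1 : distSO F ≤ frob (F - Q) := by
        apply csInf_le
        · refine ⟨0, ?_⟩
          rintro _ ⟨R, _, rfl⟩
          exact frob_nonneg _
        · exact ⟨Q, hQ, rfl⟩
      have h2 := frob_key A B F Q hA hB hQ.1
      simp only
      linarith
  rw [div_le_iff₀' hK] at h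
  linarith
end

section
/- Let n ≥ 1 and a, b, c > 1. Set A = diag(a⁻¹, 1, …, 1), B = diag(b⁻¹, 1, …, 1), F = diag(abc, 1, …, 1) (diagonal n×n matrices). Then equality holds in the perturbation inequality for the distance to SO(n): dist(F, SO(n)) = (1 + |A⁻¹ − Id|)(1 + |B⁻¹ − Id|)·dist(A F B, SO(n)) + |A⁻¹ − Id| + |B⁻¹ − Id| + |A⁻¹ − Id|·|B⁻¹ − Id|; in fact both sides equal abc − 1. -/
open Matrix

/-- The diagonal matrix `diag(t, 1, …, 1)`. -/
noncomputable def diagFirst (n : ℕ) (t : ℝ) : Matrix (Fin n) (Fin n) ℝ :=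
  Matrix.diagonal (fun i : Fin n => if (i : ℕ) = 0 then t else 1)

lemma trace_transpose_mul_self_eq {n : ℕ} (M : Matrix (Fin n) (Fin n) ℝ) :
    (Mᵀ * M).trace = ∑ j, ∑ i, M i j ^ 2 := by
  simp [Matrix.trace, Matrix.mul_apply, sq]

lemma abs_entry_le_frob {n : ℕ} (M : Matrix (Fin n) (Fin n) ℝ) (i j : Fin n) :
    |M i j| ≤ frob M := by
  unfold frob
  apply Real.abs_le_sqrt
  rw [trace_transpose_mul_self_eq]
  calc M i j ^ 2 ≤ ∑ i, M i j ^ 2 :=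
        Finset.single_le_sum (f := fun i => M i j ^ 2) (fun _ _ => sq_nonneg _)
          (Finset.mem_univ i)
    _ ≤ _ := Finset.single_le_sum (f := fun j => ∑ i, M i j ^ 2)
          (fun _ _ => Finset.sum_nonneg fun _ _ => sq_nonneg _) (Finset.mem_univ j)

lemma frob_diagFirst_sub_one {n : ℕ} (hn : 1 ≤ n) (t : ℝ) (ht : 1 ≤ t) :
    frob (diagFirst n t - 1) = t - 1 := by
  obtain ⟨m, rfl⟩ : ∃ m, n = m + 1 := ⟨n - 1, by omega⟩
  have h : diagFirst (m + 1) t - 1 =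
      Matrix.diagonal (fun i : Fin (m + 1) => if (i : ℕ) = 0 then t - 1 else 0) := by
    rw [diagFirst, ← Matrix.diagonal_one, Matrix.diagonal_sub]
    congr 1
    funext i
    split_ifs <;> simp
  rw [frob, h, Matrix.diagonal_transpose, Matrix.diagonal_mul_diagonal,
    Matrix.trace_diagonal, Fin.sum_univ_succ]
  simp [Real.sqrt_mul_self (sub_nonneg.2 ht)]

lemma SOn_entry_le_one {n : ℕ} {Q : Matrix (Fin n) (Fin n) ℝ} (hQ : Q ∈ SOn n)
    (i : Fin n) : Q i i ≤ 1 := by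
  have h := congrFun (congrFun hQ.1 i) i
  rw [Matrix.mul_apply, Matrix.one_apply_eq] at h
  have h2 : Qᵀ i i * Q i i ≤ ∑ j, Qᵀ i j * Q j i :=
    Finset.single_le_sum (f := fun j => Qᵀ i j * Q j i)
      (fun j _ => mul_self_nonneg (Q j i)) (Finset.mem_univ i)
  rw [h, Matrix.transpose_apply] at h2
  nlinarith

lemma distSO_diagFirst {n : ℕ} (hn : 1 ≤ n) (t : ℝ) (ht : 1 ≤ t) :
    distSO (diagFirst n t) = t - 1 := by
  have hl : IsLeast ((fun Q => frob (diagFirst n t - Q)) '' SOn n) (t - 1) := by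
    refine ⟨⟨1, ⟨by simp, by simp⟩, frob_diagFirst_sub_one hn t ht⟩, ?_⟩
    rintro _ ⟨Q, hQ, rfl⟩
    have h1 := abs_entry_le_frob (diagFirst n t - Q) ⟨0, hn⟩ ⟨0, hn⟩
    have h2 := SOn_entry_le_one hQ ⟨0, hn⟩
    have h3 : (diagFirst n t - Q) ⟨0, hn⟩ ⟨0, hn⟩ = t - Q ⟨0, hn⟩ ⟨0, hn⟩ := by
      simp [diagFirst]
    rw [h3] at h1
    have h4 := le_abs_self (t - Q ⟨0, hn⟩ ⟨0, hn⟩)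
    show t - 1 ≤ frob (diagFirst n t - Q)
    linarith
  exact hl.csInf_eq

lemma diagFirst_mul (n : ℕ) (s t : ℝ) :
    diagFirst n s * diagFirst n t = diagFirst n (s * t) := by
  simp only [diagFirst, Matrix.diagonal_mul_diagonal]
  congr 1
  funext i
  split_ifs <;> simp

lemma diagFirst_inv (n : ℕ) (t : ℝ) (ht : t ≠ 0) :
    (diagFirst n t⁻¹)⁻¹ = diagFirst n t := by
  apply Matrix.inv_eq_right_inv
  rw [diagFirst_mul, inv_mul_cancel₀ ht]
  simp [diagFirst]

theorem dist_SOn_perturbed_equality {n : ℕ} (hn : 1 ≤ n) (a b c : ℝ)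
    (ha : 1 < a) (hb : 1 < b) (hc : 1 < c)
    (A B F : Matrix (Fin n) (Fin n) ℝ)
    (hA : A = Matrix.diagonal (fun i : Fin n => if (i : ℕ) = 0 then a⁻¹ else 1))
    (hB : B = Matrix.diagonal (fun i : Fin n => if (i : ℕ) = 0 then b⁻¹ else 1))
    (hF : F = Matrix.diagonal (fun i : Fin n => if (i : ℕ) = 0 then a * b * c else 1)) :
    distSO F =
      (1 + frob (A⁻¹ - 1)) * (1 + frob (B⁻¹ - 1)) * distSO (A * F * B)
        + frob (A⁻¹ - 1) + frob (B⁻¹ - 1) + frob (A⁻¹ - 1) * frob (B⁻¹ - 1)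
    ∧ distSO F = a * b * c - 1 := by
  have ha0 : a ≠ 0 := by positivity
  have hb0 : b ≠ 0 := by positivity
  have hab : 1 < a * b := by nlinarith
  have habc : 1 < a * b * c := by nlinarith
  change A = diagFirst n a⁻¹ at hA
  change B = diagFirst n b⁻¹ at hB
  change F = diagFirst n (a * b * c) at hF
  have hAFB : A * F * B = diagFirst n c := by
    rw [hA, hB, hF, diagFirst_mul, diagFirst_mul]
    congr 1
    field_simp
  rw [hAFB, hA, hB, hF, diagFirst_inv n a ha0, diagFirst_inv n b hb0,
    frob_diagFirst_sub_one hn a ha.le, frob_diagFirst_sub_one hn b hb.le,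
    distSO_diagFirst hn c hc.le, distSO_diagFirst hn _ habc.le]
  exact ⟨by ring, rfl⟩
end
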